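/- Let γ > 0 and let a, b : ℤ → ℝ be bounded sequences with a_n ≥ γ for all n ∈ ℤ. Let J be the bounded self-adjoint Jacobi operator on ℓ²(ℤ; ℂ) defined by (J φ)_n = a_{n−1} φ_{n−1} + a_n φ_{n+1} + b_n φ_n. Suppose there exist positive integers p_1, p_2, … and, for each m, sequences a^{(m)}, b^{(m)} : ℤ → ℝ that are p_m-periodic (a^{(m)}_{n+p_m} = a^{(m)}_n and b^{(m)}_{n+p_m} = b^{(m)}_n for all n) with a^{(m)}_n > 0 for all n, such that for every C > 0, e^{C p_{m+1}} · max( sup_n |a^{(m)}_n − a_n|, sup_n |b^{(m)}_n − b_n| ) → 0 as m → ∞. Then for every τ ∈ (0,1), the spectrum σ(J) = { E ∈ ℝ : J − E is not invertible } is τ-homogeneous. -/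

import Mathlib

open MeasureTheory
open Polynomial in
noncomputable def sol (a b : ℤ → ℝ) (x y : ℝ[X]) : ℕ → ℝ[X]
  | 0 => x
  | 1 => y
  | (n+2) => C (1 / a (n+1)) * ((X - C (b (n+1))) * sol a b x y (n+1) - C (a n) * sol a b x y n)

open Polynomial in
noncomputable def disc (a b : ℤ → ℝ) (p : ℕ) : ℝ[X] := sol a b 1 0 p + sol a b 0 1 (p+1)

section mods
open Polynomial

lemma sol_rec (a b : ℤ → ℝ) (ha : ∀ n, 0 < a n) (x y : ℝ[X]) (n : ℕ) :
    C (a (n+1)) * sol a b x y (n+2) = (X - C (b (n+1))) * sol a b x y (n+1) - C (a n) * sol a b x y n := by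
  rw [sol, ← mul_assoc, ← C_mul]
  have := (ha (n+1)).ne'
  rw [mul_one_div_cancel this]; simp

lemma rec_eq {V : Type*} [AddCommGroup V] [Module ℝ[X] V] (a b : ℤ → ℝ) (ha : ∀ n, 0 < a n)
    (e : ℕ → V) (he : ∀ n : ℕ, (C (a n) : ℝ[X]) • e n + (C (a (n+1)) : ℝ[X]) • e (n+2)
      + (C (b (n+1)) : ℝ[X]) • e (n+1) = (X : ℝ[X]) • e (n+1)) (n : ℕ) :
    e n = sol a b 1 0 n • e 0 + sol a b 0 1 n • e 1 ∧
    e (n+1) = sol a b 1 0 (n+1) • e 0 + sol a b 0 1 (n+1) • e 1 := by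
  induction n with
  | zero => simp [sol]
  | succ n ih =>
    refine ⟨ih.2, ?_⟩
    obtain ⟨h1, h2⟩ := ih
    have h3 : e (n+2) = (C (1 / a (n+1)) : ℝ[X]) • ((X - C (b (n+1)) : ℝ[X]) • e (n+1) - (C (a n) : ℝ[X]) • e n) := by
      have : (X - C (b (n+1)) : ℝ[X]) • e (n+1) - (C (a n) : ℝ[X]) • e n = (C (a (n+1)) : ℝ[X]) • e (n+2) := by
        rw [sub_smul, ← he n]; abel
      rw [this, smul_smul, ← C_mul, one_div_mul_cancel (ha (n+1)).ne']; simp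
    rw [show n+1+1 = n+2 from rfl, h3, sol, sol]
    rw [h1, h2]
    module

lemma wron (a b : ℤ → ℝ) (ha : ∀ n, 0 < a n) (n : ℕ) :
    C (a n) * (sol a b 1 0 n * sol a b 0 1 (n+1) - sol a b 1 0 (n+1) * sol a b 0 1 n) = C (a 0) := by
  induction n with
  | zero => simp [sol]
  | succ n ih =>
    have h1 := sol_rec a b ha 1 0 n
    have h2 := sol_rec a b ha 0 1 n
    push_cast
    rw [← ih]
    linear_combination sol a b 1 0 (n+1) * h2 - sol a b 0 1 (n+1) * h1

lemma magic_mod {V : Type*} [AddCommGroup V] [Module ℝ[X] V] (a b : ℤ → ℝ) (ha : ∀ n, 0 < a n)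
    (p : ℕ) (hpa : ∀ n, a (n+p) = a n) (hpb : ∀ n, b (n+p) = b n)
    (e : ℕ → V) (he : ∀ n : ℕ, (C (a n) : ℝ[X]) • e n + (C (a (n+1)) : ℝ[X]) • e (n+2)
      + (C (b (n+1)) : ℝ[X]) • e (n+1) = (X : ℝ[X]) • e (n+1)) (n : ℕ) :
    e (n+2*p) + e n = disc a b p • e (n+p) := by
  have he' : ∀ k n : ℕ, (C (a n) : ℝ[X]) • e (n+k*p) + (C (a (n+1)) : ℝ[X]) • e (n+2+k*p)
      + (C (b (n+1)) : ℝ[X]) • e (n+1+k*p) = (X : ℝ[X]) • e (n+1+k*p) := by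
    intro k n
    have hA : ∀ m : ℤ, a (m + k*p) = a m := by
      intro m; induction k with
      | zero => simp
      | succ k ih => push_cast; rw [add_mul, one_mul, ← add_assoc, hpa, ih]
    have hB : ∀ m : ℤ, b (m + k*p) = b m := by
      intro m; clear hA; induction k with
      | zero => simp
      | succ k ih => push_cast; rw [add_mul, one_mul, ← add_assoc, hpb, ih]
    have := he (n+k*p)
    push_cast at this
    rw [hA, show (n + k*p+1 : ℤ) = (n+1)+k*p by ring, hA, hB] at this
    rw [show n+2+k*p = n+k*p+2 by ring, show n+1+k*p = n+k*p+1 by ring]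
    exact this
  have hw : sol a b 1 0 p * sol a b 0 1 (p+1) - sol a b 1 0 (p+1) * sol a b 0 1 p = 1 := by
    have h := wron a b ha p
    have h0 : a p = a 0 := by simpa using hpa 0
    rw [h0] at h
    have : (C (a 0) : ℝ[X]) ≠ 0 := by simpa using (ha 0).ne'
    exact mul_left_cancel₀ this (by rw [h, mul_one])
  have r0 := rec_eq a b ha e he p
  have r1 := rec_eq a b ha (fun n => e (n+p)) (by simpa using he' 1) p
  let d : ℕ → V := fun n => e (n+2*p) + e n - disc a b p • e (n+p)
  have hd := rec_eq a b ha d (by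
    intro n
    have h0 := he n
    have h1 := he' 1 n
    have h2 := he' 2 n
    rw [one_mul] at h1
    simp only [d]
    linear_combination (norm := module) h0 + h2 - disc a b p • h1) n
  have d0 : d 0 = 0 := by
    simp only [d, disc]
    have := r1.1
    simp only [zero_add] at this ⊢
    rw [two_mul, this, show 1 + p = p + 1 by ring, r0.1, r0.2]
    linear_combination (norm := module) (- hw) • e 0
  have d1 : d 1 = 0 := by
    simp only [d, disc]
    have := r1.2
    simp only [zero_add] at this ⊢
    rw [show 1 + 2*p = p+1+p by ring, this, show 1 + p = p + 1 by ring, r0.1, r0.2]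
    linear_combination (norm := module) (- hw) • e 1
  have := hd.1
  rw [d0, d1] at this
  simp only [smul_zero, add_zero, d] at this
  exact sub_eq_zero.1 this
end mods

open MeasureTheory

section ops
open scoped InnerProductSpace

noncomputable abbrev HH := lp (fun _ : ℤ => ℂ) 2

def IsJac (a b : ℤ → ℝ) (J : HH →L[ℂ] HH) : Prop :=
  ∀ φ : HH, ∀ n : ℤ,
      (J φ) n = (a (n - 1) : ℂ) * φ (n - 1) + (a n : ℂ) * φ (n + 1) + (b n : ℂ) * φ n

lemma HH_summable (φ : HH) : Summable fun n => ‖φ n‖ ^ 2 := by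
  have := (lp.memℓp φ).summable (by norm_num)
  simpa using this

lemma HH_norm_sq (φ : HH) : ‖φ‖ ^ 2 = ∑' n, ‖φ n‖ ^ 2 := by
  have := lp.norm_rpow_eq_tsum (p := 2) (by norm_num) φ
  simpa using this

lemma HH_mem (f : ℤ → ℂ) (h : Summable fun n => ‖f n‖ ^ 2) : Memℓp f 2 := by
  apply memℓp_gen
  simpa using h

lemma exists_wop (c : ℤ → ℝ) (k : ℤ) (M : ℝ) (hM : ∀ n, |c n| ≤ M) :
    ∃ W : HH →L[ℂ] HH, (∀ φ n, (W φ) n = (c n : ℂ) * φ (n + k)) ∧ ‖W‖ ≤ M := by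
  have hM0 : 0 ≤ M := (abs_nonneg _).trans (hM 0)
  have hs : ∀ φ : HH, Summable fun n => ‖φ (n + k)‖ ^ 2 := fun φ =>
    (Equiv.addRight k).summable_iff.2 (HH_summable φ)
  have hb : ∀ (φ : HH) n, ‖(c n : ℂ) * φ (n + k)‖ ^ 2 ≤ M ^ 2 * ‖φ (n+k)‖ ^ 2 := by
    intro φ n
    rw [norm_mul, mul_pow, Complex.norm_real, Real.norm_eq_abs]
    gcongr
    exact hM n
  have hs2 : ∀ φ : HH, Summable fun n => ‖(c n : ℂ) * φ (n + k)‖ ^ 2 := fun φ =>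
    Summable.of_nonneg_of_le (fun n => by positivity) (hb φ) ((hs φ).mul_left _)
  let L : HH →ₗ[ℂ] HH :=
    { toFun := fun φ => ⟨fun n => (c n : ℂ) * φ (n + k), HH_mem _ (hs2 φ)⟩
      map_add' := by
        intro x y; ext n; exact mul_add _ _ _
      map_smul' := by
        intro r x; ext n; simp; ring }
  have hL : ∀ φ, ‖L φ‖ ≤ M * ‖φ‖ := by
    intro φ
    apply le_of_sq_le_sq _ (by positivity)
    rw [HH_norm_sq, mul_pow, HH_norm_sq φ, ← (Equiv.addRight k).tsum_eq (fun n => ‖φ n‖^2), ← tsum_mul_left]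
    exact (hs2 φ).tsum_le_tsum (hb φ) ((hs φ).mul_left _)
  exact ⟨L.mkContinuous M hL, fun φ n => rfl, L.mkContinuous_norm_le hM0 hL⟩

lemma exists_jac (a b : ℤ → ℝ) (M : ℝ) (ha : ∀ n, |a n| ≤ M) (hb : ∀ n, |b n| ≤ M) :
    ∃ J, IsJac a b J ∧ ‖J‖ ≤ 3 * M := by
  obtain ⟨W1, h1, n1⟩ := exists_wop (fun n => a (n-1)) (-1) M (fun n => ha _)
  obtain ⟨W2, h2, n2⟩ := exists_wop a 1 M ha
  obtain ⟨W3, h3, n3⟩ := exists_wop b 0 M hb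
  refine ⟨W1 + W2 + W3, ?_, ?_⟩
  · intro φ n
    change (W1 φ) n + (W2 φ) n + (W3 φ) n = _
    rw [h1, h2, h3]; simp [sub_eq_add_neg]
  · calc _ ≤ ‖W1‖ + ‖W2‖ + ‖W3‖ := norm_add₃_le
      _ ≤ _ := by linarith

lemma IsJac.unique {a b : ℤ → ℝ} {J K : HH →L[ℂ] HH} (h : IsJac a b J) (h' : IsJac a b K) : J = K := by
  ext φ n
  rw [h φ n, h' φ n]

lemma IsJac.norm_sub {a b a' b' : ℤ → ℝ} {J K : HH →L[ℂ] HH} (h : IsJac a b J) (h' : IsJac a' b' K)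
    (η : ℝ) (ha : ∀ n, |a n - a' n| ≤ η) (hb : ∀ n, |b n - b' n| ≤ η) : ‖J - K‖ ≤ 3 * η := by
  obtain ⟨D, hD, hn⟩ := exists_jac (fun n => a n - a' n) (fun n => b n - b' n) η ha hb
  have : J - K = D := by
    apply IsJac.unique _ hD
    intro φ n
    change (J φ) n - (K φ) n = _
    rw [h φ n, h' φ n]; push_cast; ring
  rw [this]; exact hn

lemma IsJac.norm_le {a b : ℤ → ℝ} {J : HH →L[ℂ] HH} (h : IsJac a b J) (M : ℝ)
    (ha : ∀ n, |a n| ≤ M) (hb : ∀ n, |b n| ≤ M) : ‖J‖ ≤ 3 * M := by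
  obtain ⟨D, hD, hn⟩ := exists_jac a b M ha hb
  rw [h.unique hD]; exact hn

lemma wop_inner (c d : ℤ → ℝ) (k : ℤ) (W W' : HH →L[ℂ] HH)
    (h : ∀ φ n, (W φ) n = (c n : ℂ) * φ (n + k))
    (h' : ∀ φ n, (W' φ) n = (d n : ℂ) * φ (n - k)) (hcd : ∀ n, d (n + k) = c n) (φ ψ : HH) :
    ⟪W φ, ψ⟫_ℂ = ⟪φ, W' ψ⟫_ℂ := by
  rw [lp.inner_eq_tsum, lp.inner_eq_tsum, ← (Equiv.addRight k).tsum_eq (fun n => inner ℂ (φ n) ((W' ψ) n))]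
  congr 1; ext n
  simp only [Equiv.coe_addRight, h, h', hcd, add_sub_cancel_right]
  simp; ring

lemma IsJac.isSelfAdjoint {a b : ℤ → ℝ} {J : HH →L[ℂ] HH} (h : IsJac a b J) (M : ℝ)
    (ha : ∀ n, |a n| ≤ M) (hb : ∀ n, |b n| ≤ M) : IsSelfAdjoint J := by
  obtain ⟨W1, h1, n1⟩ := exists_wop (fun n => a (n-1)) (-1) M (fun n => ha _)
  obtain ⟨W2, h2, n2⟩ := exists_wop a 1 M ha
  obtain ⟨W3, h3, n3⟩ := exists_wop b 0 M hb
  have : J = W1 + W2 + W3 := by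
    apply h.unique
    intro φ n
    change (W1 φ) n + (W2 φ) n + (W3 φ) n = _
    rw [h1, h2, h3]; simp [sub_eq_add_neg]
  rw [this, ContinuousLinearMap.isSelfAdjoint_iff_isSymmetric]
  intro φ ψ
  have i1 := wop_inner (fun n => a (n-1)) a (-1) W1 W2 h1 (by simpa using h2) (fun n => rfl) φ ψ
  have i2 := wop_inner a (fun n => a (n-1)) 1 W2 W1 h2 (by simpa [sub_eq_add_neg] using h1) (by simp) φ ψ
  have i3 := wop_inner b b 0 W3 W3 h3 (by simpa using h3) (by simp) φ ψ
  simp only [ContinuousLinearMap.coe_coe, _root_.add_apply, inner_add_left, inner_add_right, i1, i2, i3]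
  ring

lemma spec_perturb (J K : HH →L[ℂ] HH) (hK : IsSelfAdjoint K) (η : ℝ)
    (hη : ‖J - K‖ ≤ η) (x : ℝ) (hx : (x : ℂ) ∈ spectrum ℂ J) :
    ∃ y : ℝ, (y : ℂ) ∈ spectrum ℂ K ∧ |x - y| ≤ η := by
  have hη0 : 0 ≤ η := (norm_nonneg _).trans hη
  by_cases hxK : (x : ℂ) ∈ spectrum ℂ K
  · exact ⟨x, hxK, by simpa using hη0⟩
  rw [spectrum.notMem_iff] at hxK
  obtain ⟨A, hA⟩ := hxK
  have : Nontrivial (HH →L[ℂ] HH) := by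
    by_contra hh
    rw [not_nontrivial_iff_subsingleton] at hh
    rw [spectrum.mem_iff] at hx
    exact hx (isUnit_of_subsingleton _)
  have hAs : IsSelfAdjoint (A : HH →L[ℂ] HH) := by
    rw [hA]
    apply IsSelfAdjoint.sub _ hK
    apply IsSelfAdjoint.algebraMap
    exact Complex.conj_ofReal x
  have hAi : IsSelfAdjoint ((A⁻¹ : (HH →L[ℂ] HH)ˣ) : HH →L[ℂ] HH) := by
    have : IsSelfAdjoint A := by
      ext1; exact hAs
    have := this.inv
    exact congrArg Units.val this
  obtain ⟨μ, hμ, hμn⟩ := spectrum.exists_nnnorm_eq_spectralRadius ((A⁻¹ : (HH →L[ℂ] HH)ˣ) : HH →L[ℂ] HH)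
  rw [hAi.spectralRadius_eq_nnnorm] at hμn
  have hμn' : ‖μ‖ = ‖((A⁻¹ : (HH →L[ℂ] HH)ˣ) : HH →L[ℂ] HH)‖ := by
    have := ENNReal.coe_injective hμn
    exact congrArg NNReal.toReal this
  have hμ0 : μ ≠ 0 := spectrum.ne_zero_of_mem_of_unit hμ
  have hμA : μ⁻¹ ∈ spectrum ℂ (A : HH →L[ℂ] HH) := by
    have := (spectrum.inv_mem_iff (r := Units.mk0 μ hμ0) (a := A⁻¹)).1 hμ
    simpa using this
  have hre := hAs.mem_spectrum_eq_re hμA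
  set t := (μ⁻¹).re with ht
  refine ⟨x - t, ?_, ?_⟩
  · rw [hre, hA, spectrum.mem_iff] at hμA
    rw [spectrum.mem_iff]
    intro hu
    apply hμA
    rw [← IsUnit.neg_iff]
    convert hu using 1
    rw [Complex.ofReal_sub, map_sub]; abel
  · rw [sub_sub_cancel]
    have htn : |t| = ‖((A⁻¹ : (HH →L[ℂ] HH)ˣ) : HH →L[ℂ] HH)‖⁻¹ := by
      rw [← hμn', ← norm_inv, hre, Complex.norm_real, Real.norm_eq_abs]
    by_contra hlt
    push Not at hlt
    rw [htn] at hlt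
    rw [spectrum.mem_iff] at hx
    apply hx
    refine (Units.ofNearby A (algebraMap ℂ (HH →L[ℂ] HH) x - J) ?_).isUnit
    rw [hA, sub_sub_sub_cancel_left, norm_sub_rev]
    exact hη.trans_lt hlt
end ops

open MeasureTheory

section magic
open Polynomial

lemma per_int {a : ℤ → ℝ} {p : ℕ} (h : ∀ n, a (n + p) = a n) (k : ℤ) (n : ℤ) : a (n + k * p) = a n := by
  induction k using Int.induction_on with
  | zero => simp
  | succ i ih => rw [add_mul, one_mul, ← add_assoc, h, ih]
  | pred i ih => rw [← ih, ← h (n + (-(i:ℤ) - 1) * p)]; congr 1; ring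

/-- precomposition -/
noncomputable def preT (K : HH →L[ℂ] HH) : (HH → ℂ) →ₗ[ℝ] (HH → ℂ) := LinearMap.funLeft ℝ ℂ K

lemma preT_pow (K : HH →L[ℂ] HH) (n : ℕ) (f : HH → ℂ) : ((preT K) ^ n) f = fun φ => f ((K ^ n) φ) := by
  induction n generalizing f with
  | zero => rfl
  | succ n ih =>
    rw [pow_succ, Module.End.mul_apply, ih, pow_succ']
    rfl

lemma preT_aeval (K : HH →L[ℂ] HH) (q : ℝ[X]) (k : ℤ) :
    (aeval (preT K) q) (fun φ : HH => φ k) = fun φ => ((aeval K (q.map (algebraMap ℝ ℂ))) φ) k := by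
  induction q using Polynomial.induction_on' with
  | add p q hp hq =>
    rw [map_add, LinearMap.add_apply, hp, hq, Polynomial.map_add, map_add]; rfl
  | monomial n r =>
    rw [aeval_monomial, Module.End.mul_apply, preT_pow, map_monomial, aeval_monomial]
    ext φ
    rw [Module.algebraMap_end_apply, Algebra.algebraMap_eq_smul_one]
    rfl

lemma magic_op {a b : ℤ → ℝ} {K : HH →L[ℂ] HH} (hK : IsJac a b K) (ha : ∀ n, 0 < a n)
    (p : ℕ) (hp : 0 < p) (hpa : ∀ n, a (n+p) = a n) (hpb : ∀ n, b (n+p) = b n) (φ : HH) (k : ℤ) :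
    ((aeval K ((disc a b p).map (algebraMap ℝ ℂ))) φ) k = φ (k + p) + φ (k - p) := by
  let _ : Module ℝ[X] (HH → ℂ) := Module.compHom _ (aeval (preT K)).toRingHom
  have hsm : ∀ (q : ℝ[X]) (f : HH → ℂ), q • f = (aeval (preT K) q) f := fun q f => rfl
  set j : ℤ := |k| + 1 with hj
  have h := magic_mod a b ha p hpa hpb (fun (n : ℕ) (φ : HH) => φ (n + (-j) * p)) (by
    intro n
    simp only [hsm]
    simp only [aeval_C, aeval_X, Module.algebraMap_end_apply]
    funext φ
    have := hK φ (n + 1 + (-j)*p)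
    rw [per_int hpa, per_int hpb, show (n + 1 + (-j)*p - 1 : ℤ) = n + (-j) * p by ring, per_int hpa] at this
    change (a n : ℂ) * φ (n + (-j)*p) + (a (n+1) : ℂ) * φ (((n+2:ℕ):ℤ) + (-j)*p)
      + (b (n+1) : ℂ) * φ (((n+1:ℕ):ℤ) + (-j)*p) = (K φ) (((n+1:ℕ):ℤ) + (-j)*p)
    push_cast
    rw [this]
    rw [show (n + 1 + (-j)*p + 1 : ℤ) = n + 1 + 1 + (-j) * p by ring])
  have hn : 0 ≤ k - p + j * p := by
    have : 0 ≤ |k| * ((p:ℤ) - 1) := mul_nonneg (abs_nonneg _) (by omega)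
    have := neg_abs_le k
    rw [hj]; nlinarith
  have h2 := congrFun (h (k - p + j * p).toNat) φ
  rw [hsm, preT_aeval] at h2
  simp only [Pi.add_apply] at h2
  push_cast at h2
  rw [Int.toNat_of_nonneg hn] at h2
  rw [show (k - p + j * p + 2 * p + -j * p : ℤ) = k + p by ring,
    show (k - p + j * p + p + -j * p : ℤ) = k by ring,
    show (k - p + j * p + -j * p : ℤ) = k - p by ring] at h2
  exact h2.symm

lemma disc_le_of_mem {a b : ℤ → ℝ} {K : HH →L[ℂ] HH} (hK : IsJac a b K) (ha : ∀ n, 0 < a n)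
    (p : ℕ) (hp : 0 < p) (hpa : ∀ n, a (n+p) = a n) (hpb : ∀ n, b (n+p) = b n) (x : ℝ)
    (hx : (x : ℂ) ∈ spectrum ℂ K) : |(disc a b p).eval x| ≤ 2 := by
  obtain ⟨W1, h1, n1⟩ := exists_wop (fun n => 1) p 1 (by simp)
  obtain ⟨W2, h2, n2⟩ := exists_wop (fun n => 1) (-p) 1 (by simp)
  have heq : aeval K ((disc a b p).map (algebraMap ℝ ℂ)) = W1 + W2 := by
    ext φ k
    rw [magic_op hK ha p hp hpa hpb]
    change _ = (W1 φ) k + (W2 φ) k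
    rw [h1, h2]; simp [sub_eq_add_neg]
  have hm := spectrum.subset_polynomial_aeval K ((disc a b p).map (algebraMap ℝ ℂ)) ⟨x, hx, rfl⟩
  rw [heq] at hm
  have := spectrum.norm_le_norm_mul_of_mem hm
  have e1 : ‖(1 : HH →L[ℂ] HH)‖ ≤ 1 := ContinuousLinearMap.norm_id_le
  have e2 : ‖W1 + W2‖ ≤ 2 := (norm_add_le _ _).trans (by linarith)
  have e3 : (eval (x:ℂ) ((disc a b p).map (algebraMap ℝ ℂ))) = (((disc a b p).eval x : ℝ) : ℂ) := by
    rw [eval_map_algebraMap]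
    exact aeval_algebraMap_apply ℂ x _
  rw [show (fun x => eval x ((disc a b p).map (algebraMap ℝ ℂ))) (x:ℂ) = _ from e3] at this
  rw [Complex.norm_real, Real.norm_eq_abs] at this
  refine this.trans ?_
  exact (mul_le_mul e2 e1 (norm_nonneg _) (by norm_num)).trans (by norm_num)

lemma exists_bloch {a b : ℤ → ℝ} (ha : ∀ n, 0 < a n)
    (p : ℕ) (hpa : ∀ n, a (n+p) = a n) (hpb : ∀ n, b (n+p) = b n) (z : ℂ) (c : ℝ) (hc : |c| ≤ 2)
    (hz : aeval z (disc a b p) = (c : ℂ)) :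
    ∃ v : ℕ → ℂ, (∀ n : ℕ, (a n : ℂ) * v n + a (n+1) * v (n+2) + b (n+1) * v (n+1) = z * v (n+1)) ∧
      (v ≠ 0) ∧ ∀ n, ‖v (n+p)‖ = ‖v n‖ := by
  have h1 := magic_mod a b ha p hpa hpb (sol a b 0 1) (by
    intro n
    have := sol_rec a b ha 0 1 n
    simp only [smul_eq_mul]
    rw [this]; ring)
  set u : ℕ → ℂ := fun n => aeval z (sol a b 0 1 n) with hu
  have hur : ∀ n : ℕ, (a n : ℂ) * u n + a (n+1) * u (n+2) + b (n+1) * u (n+1) = z * u (n+1) := by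
    intro n
    have := congrArg (aeval z) (sol_rec a b ha 0 1 n)
    simp only [map_mul, map_sub, aeval_C, aeval_X, Complex.coe_algebraMap] at this
    simp only [hu]
    rw [this]; ring
  have hud : ∀ n, u (n+2*p) + u n = c * u (n+p) := by
    intro n
    have := congrArg (aeval z) (h1 n)
    rw [smul_eq_mul, map_mul, hz, map_add] at this
    exact this
  have hu1 : u 1 = 1 := by simp [hu, sol]
  obtain ⟨l, hl, hlc⟩ : ∃ l : ℂ, ‖l‖ = 1 ∧ l * l + 1 = c * l := by
    refine ⟨Complex.exp (Real.arccos (c/2) * Complex.I), Complex.norm_exp_ofReal_mul_I _, ?_⟩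
    have hcos : Real.cos (Real.arccos (c/2)) = c/2 :=
      Real.cos_arccos (by linarith [(abs_le.1 hc).1]) (by linarith [(abs_le.1 hc).2])
    have h2 := Complex.two_cos (Real.arccos (c/2))
    rw [← Complex.ofReal_cos, hcos] at h2
    set l := Complex.exp (Real.arccos (c/2) * Complex.I)
    have hinv : Complex.exp (-(Real.arccos (c/2)) * Complex.I) * l = 1 := by
      rw [← Complex.exp_add]; simp
    push_cast at h2
    linear_combination (-l) * h2 - hinv
  by_cases hv : ∀ n, u (n+p) - l * u n = 0
  · refine ⟨u, hur, ?_, ?_⟩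
    · intro h; rw [h] at hu1; simp at hu1
    · intro n
      rw [sub_eq_zero.1 (hv n), norm_mul, hl, one_mul]
  · refine ⟨fun n => u (n+p) - l * u n, ?_, ?_, ?_⟩
    · intro n
      have e1 := hur n
      have e2 := hur (n+p)
      push_cast at e2
      rw [hpa, show (n + p + 1 : ℤ) = n + 1 + p by ring, hpa, hpb] at e2
      simp only
      rw [show n + 2 + p = n + p + 2 by ring, show n + 1 + p = n + p + 1 by ring]
      linear_combination e2 - l * e1
    · intro h; exact hv (fun n => congrFun h n)
    · intro n
      have e := hud n
      have : u (n + p) - l * u n = l * (u (n+p+p) - l * u (n+p)) := by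
        rw [show n + p + p = n + 2 * p by ring]
        linear_combination (- l) * e + (u (n+p)) * hlc
      simp only
      rw [this, norm_mul, hl, one_mul]
end magic

open MeasureTheory
section trunc

lemma mem_spec_of_bloch {a b : ℤ → ℝ} {K : HH →L[ℂ] HH} (hK : IsJac a b K) (M : ℝ)
    (haM : ∀ n, |a n| ≤ M) (hbM : ∀ n, |b n| ≤ M) (p : ℕ) (hp : 0 < p) (z : ℂ) (v : ℕ → ℂ)
    (hv : ∀ n : ℕ, (a n : ℂ) * v n + a (n+1) * v (n+2) + b (n+1) * v (n+1) = z * v (n+1))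
    (hv0 : v ≠ 0) (hvp : ∀ n, ‖v (n+p)‖ = ‖v n‖) : z ∈ spectrum ℂ K := by
  rw [spectrum.mem_iff]
  rintro ⟨A, hA⟩
  have hM0 : 0 ≤ M := (abs_nonneg _).trans (haM 0)
  set R : HH →L[ℂ] HH := ((A⁻¹ : (HH →L[ℂ] HH)ˣ) : HH →L[ℂ] HH) with hR
  have hRA : ∀ φ, R (z • φ - K φ) = φ := by
    intro φ
    have : R * (algebraMap ℂ (HH →L[ℂ] HH) z - K) = 1 := by rw [← hA, hR]; exact A.inv_mul
    have := congrArg (fun T : HH →L[ℂ] HH => T φ) this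
    simpa [Algebra.algebraMap_eq_smul_one] using this
  have hvk : ∀ j n, ‖v (n + j * p)‖ = ‖v n‖ := by
    intro j n
    induction j with
    | zero => simp
    | succ j ih => rw [add_mul, one_mul, ← add_assoc, hvp, ih]
  obtain ⟨i0, hi0⟩ : ∃ i, v i ≠ 0 := by
    by_contra h; push Not at h; exact hv0 (funext h)
  set V : ℝ := ∑ i ∈ Finset.range p, ‖v i‖ with hV
  have hV0 : 0 ≤ V := Finset.sum_nonneg (fun _ _ => norm_nonneg _)
  have hvV : ∀ n, ‖v n‖ ≤ V := by
    intro n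
    rw [← Nat.mod_add_div n p, mul_comm p, hvk]
    exact Finset.single_le_sum (f := fun i => ‖v i‖) (fun _ _ => norm_nonneg _) (Finset.mem_range.2 (Nat.mod_lt _ hp))
  set G : ℝ := (‖z‖ + 3 * M) * V with hG
  -- truncation
  have key : ∀ m : ℕ, (m : ℝ) * ‖v i0‖ ^ 2 ≤ ‖R‖ ^ 2 * (4 * G ^ 2) := by
    intro m
    set L : ℕ := m * p + i0 + 2 with hL
    set f : ℤ → ℂ := fun n => if 0 ≤ n ∧ n < L then v n.toNat else 0 with hf
    have hfV : ∀ n, ‖f n‖ ≤ V := by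
      intro n; simp only [hf]; split_ifs
      · exact hvV _
      · simpa using hV0
    have hfs : Summable fun n => ‖f n‖ ^ 2 := by
      apply summable_of_ne_finset_zero (s := Finset.Ico 0 (L:ℤ))
      intro n hn
      rw [Finset.mem_Ico] at hn
      simp [hf, hn]
    set φ : HH := ⟨f, HH_mem f hfs⟩ with hφ
    have hφn : ∀ n, φ n = f n := fun n => rfl
    set ψ : HH := z • φ - K φ with hψ
    have hψn : ∀ n, ψ n = z * f n - ((a (n-1) : ℂ) * f (n-1) + a n * f (n+1) + b n * f n) := by
      intro n
      change z * f n - (K φ) n = _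
      rw [hK φ n]
    have hψG : ∀ n, ‖ψ n‖ ≤ G := by
      intro n
      rw [hψn]
      have e : ∀ (c : ℤ → ℝ) (hc : ∀ n, |c n| ≤ M) k l, ‖(c k : ℂ) * f l‖ ≤ M * V := by
        intro c hc k l
        rw [norm_mul, Complex.norm_real, Real.norm_eq_abs]
        exact mul_le_mul (hc k) (hfV l) (norm_nonneg _) hM0
      have e0 : ‖z * f n‖ ≤ ‖z‖ * V := by
        rw [norm_mul]; gcongr; exact hfV n
      have e1 := e a haM (n-1) (n-1)
      have e2 := e a haM n (n+1)
      have e3 := e b hbM n n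
      refine (norm_sub_le _ _).trans ?_
      have := norm_add₃_le (a := (a (n-1) : ℂ) * f (n-1)) (b := a n * f (n+1)) (c := b n * f n)
      rw [hG]; linarith
    have hψ0 : ∀ n, n ∉ ({-1, 0, (L:ℤ)-1, (L:ℤ)} : Finset ℤ) → ψ n = 0 := by
      intro n hn
      simp only [Finset.mem_insert, Finset.mem_singleton, not_or] at hn
      obtain ⟨n1, n2, n3, n4⟩ := hn
      rw [hψn]
      by_cases hin : 0 < n ∧ n < (L:ℤ) - 1
      · obtain ⟨k, rfl⟩ : ∃ k : ℕ, n = k + 1 := ⟨(n-1).toNat, by omega⟩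
        have hk := hv k
        have f1 : f ((k:ℤ)+1) = v (k+1) := by
          simp only [hf]; rw [if_pos (by omega)]; congr 1
        have f2 : f ((k:ℤ)+1-1) = v k := by
          simp only [hf]; rw [if_pos (by omega)]; congr 1; omega
        have f3 : f ((k:ℤ)+1+1) = v (k+2) := by
          simp only [hf]; rw [if_pos (by omega)]; congr 1
        rw [f1, f2, f3, ← hk]
        simp only [add_sub_cancel_right]; ring
      · have f1 : f n = 0 := by simp only [hf]; rw [if_neg (by omega)]
        have f2 : f (n-1) = 0 := by simp only [hf]; rw [if_neg (by omega)]
        have f3 : f (n+1) = 0 := by simp only [hf]; rw [if_neg (by omega)]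
        rw [f1, f2, f3]; simp
    have hψnorm : ‖ψ‖ ^ 2 ≤ 4 * G ^ 2 := by
      rw [HH_norm_sq, tsum_eq_sum (s := ({-1, 0, (L:ℤ)-1, (L:ℤ)} : Finset ℤ)) (by
        intro n hn; rw [hψ0 n hn]; simp)]
      have hcard : (({-1, 0, (L:ℤ)-1, (L:ℤ)} : Finset ℤ).card : ℝ) ≤ 4 := by
        exact_mod_cast Finset.card_le_four
      refine (Finset.sum_le_card_nsmul _ _ (G^2) ?_).trans ?_
      · intro n _
        exact pow_le_pow_left₀ (norm_nonneg _) (hψG n) 2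
      · rw [nsmul_eq_mul]; gcongr
    have hφlow : (m : ℝ) * ‖v i0‖ ^ 2 ≤ ‖φ‖ ^ 2 := by
      rw [HH_norm_sq]
      have hinj : Set.InjOn (fun j : ℕ => ((i0 + j * p : ℕ) : ℤ)) (Finset.range m) := by
        intro j _ k _ h
        have h' : i0 + j * p = i0 + k * p := Nat.cast_injective (R := ℤ) h
        exact Nat.eq_of_mul_eq_mul_right hp (by omega)
      have := (HH_summable φ).sum_le_tsum ((Finset.range m).image (fun j : ℕ => ((i0 + j * p : ℕ) : ℤ)))
        (fun _ _ => by positivity)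
      rw [Finset.sum_image hinj] at this
      refine le_trans (le_of_eq ?_) this
      rw [Finset.sum_congr rfl (g := fun _ => ‖v i0‖^2)]
      · simp
      · intro j hj
        have hj' := Finset.mem_range.1 hj
        have : j * p ≤ m * p := Nat.mul_le_mul_right _ hj'.le
        rw [hφn]
        simp only [hf]
        rw [if_pos ⟨by positivity, by rw [hL]; norm_cast; omega⟩, Int.toNat_natCast, hvk]
    have h1 : ‖φ‖ ≤ ‖R‖ * ‖ψ‖ := by
      conv_lhs => rw [← hRA φ]
      exact R.le_opNorm _
    calc _ ≤ ‖φ‖ ^ 2 := hφlow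
      _ ≤ (‖R‖ * ‖ψ‖) ^ 2 := by gcongr
      _ = ‖R‖ ^ 2 * ‖ψ‖ ^ 2 := by ring
      _ ≤ _ := by gcongr
  have hpos : 0 < ‖v i0‖ ^ 2 := by positivity
  obtain ⟨m, hm⟩ := exists_nat_gt ((‖R‖ ^ 2 * (4 * G ^ 2)) / ‖v i0‖ ^ 2)
  rw [div_lt_iff₀ hpos] at hm
  exact absurd (key m) (not_le.2 hm)
end trunc

open MeasureTheory
section polys
open Polynomial

lemma sol_natDegree (a b : ℤ → ℝ) (x y : ℝ[X]) (hx : x.natDegree = 0) (hy : y.natDegree = 0) (n : ℕ) :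
    (sol a b x y n).natDegree ≤ n - 1 ∧ (sol a b x y (n+1)).natDegree ≤ n := by
  induction n with
  | zero => simp [sol, hx, hy]
  | succ n ih =>
    refine ⟨by simpa using ih.2, ?_⟩
    rw [show n+1+1 = n+2 from rfl, sol]
    refine natDegree_C_mul_le _ _ |>.trans ?_
    refine (natDegree_sub_le _ _).trans (max_le ?_ ?_)
    · refine natDegree_mul_le.trans ?_
      rw [natDegree_X_sub_C]; omega
    · refine natDegree_C_mul_le _ _ |>.trans ?_
      omega

lemma disc_natDegree (a b : ℤ → ℝ) (p : ℕ) : (disc a b p).natDegree ≤ p := by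
  refine (natDegree_add_le _ _).trans (max_le ?_ ?_)
  · exact (sol_natDegree a b 1 0 (by simp) (by simp) p).1.trans (by omega)
  · exact (sol_natDegree a b 0 1 (by simp) (by simp) p).2

lemma sol_bound (a b : ℤ → ℝ) (u w : ℝ) (hu : |u| ≤ 1) (hw : |w| ≤ 1) (R g M D x : ℝ) (hg : 0 < g)
    (hx : |x| ≤ R) (ha : ∀ n, g ≤ a n)
    (haM : ∀ n, |a n| ≤ M) (hbM : ∀ n, |b n| ≤ M) (hD1 : 1 ≤ D) (hD : (1 + R + 2 * M) ≤ g * D) (n : ℕ) :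
    (|(sol a b (C u) (C w) n).eval x| ≤ D ^ n ∧ |(sol a b (C u) (C w) n).derivative.eval x| ≤ D ^ n) ∧
    (|(sol a b (C u) (C w) (n+1)).eval x| ≤ D ^ (n+1) ∧
      |(sol a b (C u) (C w) (n+1)).derivative.eval x| ≤ D ^ (n+1)) := by
  induction n with
  | zero =>
    have : 0 ≤ D := by linarith
    simp [sol, hu, this]; linarith
  | succ n ih =>
    refine ⟨ih.2, ?_⟩
    obtain ⟨⟨h1, h2⟩, h3, h4⟩ := ih
    have hM0 : 0 ≤ M := (abs_nonneg _).trans (haM 0)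
    have hR0 : 0 ≤ R := (abs_nonneg _).trans hx
    have hDn : D ^ n ≤ D ^ (n+1) := pow_le_pow_right₀ hD1 (by omega)
    have hDp : 0 ≤ D ^ (n+1) := by positivity
    have hap : 0 < a (n+1) := hg.trans_le (ha _)
    have hxb : |x - b (n+1)| ≤ R + M := (abs_sub _ _).trans (add_le_add hx (hbM _))
    have t1 : |(x - b (n+1)) * (sol a b (C u) (C w) (n+1)).eval x| ≤ (R + M) * D ^ (n+1) := by
      rw [abs_mul]; gcongr
    have t2 : |a n * (sol a b (C u) (C w) n).eval x| ≤ M * D ^ (n+1) := by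
      rw [abs_mul]; exact mul_le_mul (haM _) (h1.trans hDn) (abs_nonneg _) hM0
    have t3 : |(x - b (n+1)) * (sol a b (C u) (C w) (n+1)).derivative.eval x| ≤ (R + M) * D ^ (n+1) := by
      rw [abs_mul]; gcongr
    have t4 : |a n * (sol a b (C u) (C w) n).derivative.eval x| ≤ M * D ^ (n+1) := by
      rw [abs_mul]; exact mul_le_mul (haM _) (h2.trans hDn) (abs_nonneg _) hM0
    have fin : ∀ y : ℝ, |y| ≤ (1 + R + 2 * M) * D ^ (n+1) → |1 / a (n+1) * y| ≤ D ^ (n+2) := by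
      intro y hy
      rw [one_div_mul_eq_div, abs_div, abs_of_pos hap, div_le_iff₀ hap]
      refine hy.trans ?_
      calc _ ≤ g * D * D ^ (n+1) := by gcongr
        _ = D ^ (n+2) * g := by ring
        _ ≤ _ := by gcongr; exact ha _
    constructor
    · rw [show n+1+1 = n+2 from rfl, sol]
      simp only [eval_mul, eval_C, eval_sub, eval_X]
      apply fin
      refine (abs_sub _ _).trans ?_
      linarith
    · rw [show n+1+1 = n+2 from rfl, sol]
      simp only [derivative_mul, derivative_sub, derivative_C, derivative_X, eval_add, eval_mul, eval_C,
        eval_sub, eval_X, eval_one, eval_zero, zero_mul, zero_add, sub_zero, one_mul, mul_one]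
      apply fin
      refine (abs_sub _ _).trans ?_
      have := abs_add_le ((sol a b (C u) (C w) (n+1)).eval x) ((x - b (n+1)) * (sol a b (C u) (C w) (n+1)).derivative.eval x)
      linarith

lemma disc_der_bound (a b : ℤ → ℝ) (R g M D x : ℝ) (hg : 0 < g)
    (hx : |x| ≤ R) (ha : ∀ n, g ≤ a n)
    (haM : ∀ n, |a n| ≤ M) (hbM : ∀ n, |b n| ≤ M) (hD1 : 1 ≤ D) (hD : (1 + R + 2 * M) ≤ g * D) (p : ℕ) :
    |(disc a b p).derivative.eval x| ≤ 2 * D ^ (p+1) := by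
  have h1 := (sol_bound a b 1 0 (by simp) (by simp) R g M D x hg hx ha haM hbM hD1 hD p).1.2
  have h2 := (sol_bound a b 0 1 (by simp) (by simp) R g M D x hg hx ha haM hbM hD1 hD p).2.2
  have hDn : D ^ p ≤ D ^ (p+1) := pow_le_pow_right₀ hD1 (by omega)
  rw [C_1, C_0] at h1 h2
  rw [disc, derivative_add, eval_add]
  refine (abs_add_le _ _).trans ?_
  linarith

lemma laguerre_prod (s : Multiset ℝ) (x : ℝ) :
    let f := (s.map (fun r => X - C r)).prod
    0 ≤ f.derivative.eval x ^ 2 - f.eval x * f.derivative.derivative.eval x ∧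
    (s ≠ 0 → f.eval x ≠ 0 → 0 < f.derivative.eval x ^ 2 - f.eval x * f.derivative.derivative.eval x) := by
  induction s using Multiset.induction_on with
  | empty => simp
  | cons r s ih =>
    simp only [Multiset.map_cons, Multiset.prod_cons] at ih ⊢
    set g := (s.map (fun r => X - C r)).prod
    have e : ((X - C r) * g).derivative.eval x ^ 2
        - ((X - C r) * g).eval x * ((X - C r) * g).derivative.derivative.eval x
        = g.eval x ^ 2 + (x - r)^2 * (g.derivative.eval x ^ 2 - g.eval x * g.derivative.derivative.eval x) := by
      simp only [derivative_mul, derivative_sub, derivative_C, derivative_X, derivative_add, eval_add, eval_mul, eval_C,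
        eval_sub, eval_X, eval_one, eval_zero, zero_mul, zero_add, sub_zero, one_mul, mul_one]
      ring
    rw [e]
    have h := mul_nonneg (sq_nonneg (x - r)) ih.1
    refine ⟨by positivity, fun _ hne => ?_⟩
    have : g.eval x ≠ 0 := by
      intro h0; apply hne; rw [eval_mul, h0, mul_zero]
    have : 0 < g.eval x ^ 2 := by positivity
    linarith

lemma laguerre (f : ℝ[X]) (hdeg : f.natDegree ≠ 0) (hr : ∀ z : ℂ, aeval z f = 0 → z.im = 0) (x : ℝ)
    (hx : f.eval x ≠ 0) : 0 < f.derivative.eval x ^ 2 - f.eval x * f.derivative.derivative.eval x := by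
  set F : ℂ[X] := f.map (algebraMap ℝ ℂ) with hF
  have hf0 : f ≠ 0 := by rintro rfl; simp at hdeg
  have hF0 : F ≠ 0 := (Polynomial.map_ne_zero_iff (algebraMap ℝ ℂ).injective).2 hf0
  have hs : F.Splits := IsAlgClosed.splits F
  have h1 := hs.eq_prod_roots
  have hre : F.roots = (F.roots.map Complex.re).map (algebraMap ℝ ℂ) := by
    rw [Multiset.map_map]
    conv_lhs => rw [← Multiset.map_id F.roots]
    apply Multiset.map_congr rfl
    intro z hz
    rw [mem_roots hF0, IsRoot, hF, eval_map_algebraMap] at hz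
    have := hr z hz
    apply Complex.ext <;> simp [this]
  set s := F.roots.map Complex.re with hsdef
  have hlc : F.leadingCoeff = algebraMap ℝ ℂ f.leadingCoeff := leadingCoeff_map _
  have h2 : f = C f.leadingCoeff * (s.map (fun r => X - C r)).prod := by
    apply Polynomial.map_injective (algebraMap ℝ ℂ) (algebraMap ℝ ℂ).injective
    rw [Polynomial.map_mul, map_C, ← hlc, Polynomial.map_multiset_prod, Multiset.map_map]
    rw [← hF]
    conv_lhs => rw [h1, hre, Multiset.map_map]
    congr 3
    funext r; simp
  set c := f.leadingCoeff with hc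
  have hc0 : c ≠ 0 := leadingCoeff_ne_zero.2 hf0
  have hs0 : s ≠ 0 := by
    intro h
    rw [h] at h2
    apply hdeg; rw [h2]; simp
  have hL := (laguerre_prod s x).2 hs0
  set g := (s.map (fun r => X - C r)).prod
  rw [h2] at hx ⊢
  simp only [derivative_C_mul, eval_mul, eval_C] at hx ⊢
  have := hL (right_ne_zero_of_mul hx)
  have : 0 < c^2 * (g.derivative.eval x ^ 2 - g.eval x * g.derivative.derivative.eval x) := by positivity
  linarith

lemma crit (f : ℝ[X]) (hdeg : f.natDegree ≠ 0)
    (hr : ∀ c : ℝ, |c| ≤ 2 → ∀ z : ℂ, aeval z f = (c : ℂ) → z.im = 0)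
    (x c : ℝ) (hc : |c| ≤ 2) (hx : f.eval x ≠ c) :
    (f.eval x - c) * f.derivative.derivative.eval x < f.derivative.eval x ^ 2 := by
  have := laguerre (f - C c) (by rwa [natDegree_sub_C]) (by
    intro z hz
    apply hr c hc z
    rw [map_sub, aeval_C, sub_eq_zero] at hz
    exact hz) x (by rw [eval_sub, eval_C]; exact sub_ne_zero.2 hx)
  simp only [derivative_sub, derivative_C, sub_zero, eval_sub, eval_C] at this
  linarith
end polys

open MeasureTheory
section bands
open Polynomial Topology Filter

lemma attains_two (f : ℝ[X]) (hdeg : f.natDegree ≠ 0)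
    (hr : ∀ c : ℝ, |c| ≤ 2 → ∀ z : ℂ, aeval z f = (c : ℂ) → z.im = 0) (x : ℝ)
    (hcomp : IsCompact (connectedComponentIn {y : ℝ | |f.eval y| ≤ 2} x)) (hx : |f.eval x| ≤ 2) :
    ∃ y ∈ connectedComponentIn {y : ℝ | |f.eval y| ≤ 2} x, f.eval y = 2 := by
  set S : Set ℝ := {y : ℝ | |f.eval y| ≤ 2} with hS
  set Q := connectedComponentIn S x with hQ
  have hQS : Q ⊆ S := connectedComponentIn_subset S x
  have hxQ : x ∈ Q := mem_connectedComponentIn hx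
  by_contra hno
  push Not at hno
  have hlt : ∀ y ∈ Q, f.eval y < 2 := fun y hy =>
    lt_of_le_of_ne (abs_le.1 (hQS hy)).2 (hno y hy)
  obtain ⟨y, hyQ, hymax⟩ := hcomp.exists_isMaxOn ⟨x, hxQ⟩ (f.continuous.continuousOn)
  have hy2 : f.eval y < 2 := hlt y hyQ
  have hym2 : -2 ≤ f.eval y := (abs_le.1 (hQS hyQ)).1
  have hext : ∀ I : Set ℝ, IsPreconnected I → y ∈ I → I ⊆ S → I ⊆ Q := by
    intro I hI hyI hIS
    rw [hQ, connectedComponentIn_eq hyQ]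
    exact hI.subset_connectedComponentIn hyI hIS
  have hext' : ∀ᶠ t in 𝓝 y, (∀ᶠ s in 𝓝 y, -2 ≤ f.eval s) → t ∈ Q := by
    by_cases h : ∀ᶠ s in 𝓝 y, -2 ≤ f.eval s
    · have h2 : ∀ᶠ s in 𝓝 y, f.eval s < 2 := f.continuous.continuousAt.eventually_lt_const hy2
      obtain ⟨ε, hε, hb⟩ := Metric.eventually_nhds_iff_ball.1 (h.and h2)
      have : Metric.ball y ε ⊆ Q := by
        apply hext
        · rw [Real.ball_eq_Ioo]; exact isPreconnected_Ioo
        · exact Metric.mem_ball_self hε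
        · intro t ht
          exact abs_le.2 ⟨(hb t ht).1, (hb t ht).2.le⟩
      filter_upwards [Metric.ball_mem_nhds y hε] with t ht _ using this ht
    · exact Eventually.of_forall (fun t ht => absurd ht h)
  have hlm : (∀ᶠ s in 𝓝 y, -2 ≤ f.eval s) → IsLocalMax (fun t => f.eval t) y := by
    intro h
    filter_upwards [hext'] with t ht
    exact hymax (ht h)
  have hderiv : deriv (fun t => f.eval t) = fun t => f.derivative.eval t := by
    funext t; exact f.deriv
  have hc2 := crit f hdeg hr y 2 (by norm_num) hy2.ne
  rcases hym2.lt_or_eq with hgt | heq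
  · have hmax := hlm ((f.continuous.continuousAt.eventually_const_lt hgt).mono fun _ h => le_of_lt h)
    have hd0 := hmax.deriv_eq_zero
    rw [hderiv] at hd0
    simp only at hd0
    have hc3 := crit f hdeg hr y (-2) (by norm_num) hgt.ne'
    rw [hd0] at hc2 hc3
    have : f.derivative.derivative.eval y > 0 := by nlinarith
    nlinarith
  · have hval : ∀ t ∈ Q, f.eval t ≤ -2 := fun t ht => by rw [heq]; exact hymax ht
    have hslope := hasDerivAt_iff_tendsto_slope.1 (f.hasDerivAt y)
    have h2 : ∀ᶠ s in 𝓝 y, f.eval s < 2 := f.continuous.continuousAt.eventually_lt_const hy2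
    rcases lt_trichotomy (f.derivative.eval y) 0 with hneg | hzero | hpos
    · have hs : ∀ᶠ t in 𝓝[≠] y, slope (fun t => f.eval t) y t < 0 := hslope.eventually_lt_const hneg
      rw [eventually_nhdsWithin_iff] at hs
      obtain ⟨ε, hε, hb⟩ := Metric.eventually_nhds_iff_ball.1 (hs.and h2)
      have hin : ∀ t ∈ Set.Ico (y - ε/2) y, -2 < f.eval t ∧ f.eval t < 2 := by
        intro t ht
        have htb : t ∈ Metric.ball y ε := by
          rw [Real.ball_eq_Ioo]; exact ⟨by linarith [ht.1], by linarith [ht.2]⟩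
        have := (hb t htb).1 ht.2.ne
        rw [slope_def_field, div_neg_iff] at this
        refine ⟨?_, (hb t htb).2⟩
        rcases this with h | h
        · linarith [h.1]
        · linarith [h.2, ht.2]
      have hsub : Set.Icc (y - ε/2) y ⊆ Q := by
        apply hext _ isPreconnected_Icc ⟨by linarith, le_rfl⟩
        intro t ht
        rcases ht.2.lt_or_eq with h | h
        · exact abs_le.2 ⟨(hin t ⟨ht.1, h⟩).1.le, (hin t ⟨ht.1, h⟩).2.le⟩
        · rw [h]; exact hQS hyQ
      have e1 := hval _ (hsub ⟨le_rfl, by linarith⟩)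
      have e2 := (hin (y - ε/2) ⟨le_rfl, by linarith⟩).1
      linarith
    · rw [hzero] at hc2
      have hdd : 0 < f.derivative.derivative.eval y := by nlinarith
      have hmin : IsLocalMin (fun t => f.eval t) y := by
        apply isLocalMin_of_deriv_deriv_pos
        · rw [hderiv, f.derivative.deriv]; exact hdd
        · rw [hderiv]; exact hzero
        · exact f.continuous.continuousAt
      have hge : ∀ᶠ s in 𝓝 y, -2 ≤ f.eval s := by
        filter_upwards [hmin] with s hs; rw [heq]; exact hs
      have hconst : (fun t => f.eval t) =ᶠ[𝓝 y] fun _ => (-2 : ℝ) := by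
        filter_upwards [hge, hlm hge] with s h1 h2
        have h2' : f.eval s ≤ f.eval y := h2
        linarith
      have hd := hconst.deriv.deriv_eq
      rw [hderiv, f.derivative.deriv] at hd
      simp at hd
      linarith
    · have hs : ∀ᶠ t in 𝓝[≠] y, 0 < slope (fun t => f.eval t) y t := hslope.eventually_const_lt hpos
      rw [eventually_nhdsWithin_iff] at hs
      obtain ⟨ε, hε, hb⟩ := Metric.eventually_nhds_iff_ball.1 (hs.and h2)
      have hin : ∀ t ∈ Set.Ioc y (y + ε/2), -2 < f.eval t ∧ f.eval t < 2 := by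
        intro t ht
        have htb : t ∈ Metric.ball y ε := by
          rw [Real.ball_eq_Ioo]; exact ⟨by linarith [ht.1], by linarith [ht.2]⟩
        have := (hb t htb).1 ht.1.ne'
        rw [slope_def_field, div_pos_iff] at this
        refine ⟨?_, (hb t htb).2⟩
        rcases this with h | h
        · linarith [h.1]
        · linarith [h.2, ht.1]
      have hsub : Set.Icc y (y + ε/2) ⊆ Q := by
        apply hext _ isPreconnected_Icc ⟨le_rfl, by linarith⟩
        intro t ht
        rcases ht.1.lt_or_eq with h | h
        · exact abs_le.2 ⟨(hin t ⟨h, ht.2⟩).1.le, (hin t ⟨h, ht.2⟩).2.le⟩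
        · rw [← h]; exact hQS hyQ
      have e1 := hval _ (hsub ⟨by linarith, le_rfl⟩)
      have e2 := (hin (y + ε/2) ⟨by linarith, le_rfl⟩).1
      linarith

lemma band (f : ℝ[X]) (hdeg : f.natDegree ≠ 0)
    (hr : ∀ c : ℝ, |c| ≤ 2 → ∀ z : ℂ, aeval z f = (c : ℂ) → z.im = 0) (R L : ℝ)
    (hR : ∀ x, |f.eval x| ≤ 2 → |x| ≤ R) (hL : ∀ x, |x| ≤ R → |f.derivative.eval x| ≤ L)
    (x : ℝ) (hx : |f.eval x| ≤ 2) :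
    ∃ u v, u ≤ x ∧ x ≤ v ∧ (∀ t ∈ Set.Icc u v, |f.eval t| ≤ 2) ∧ 4 ≤ L * (v - u) := by
  set S : Set ℝ := {y : ℝ | |f.eval y| ≤ 2} with hS
  have hSc : IsClosed S := isClosed_le (f.continuous.abs) continuous_const
  have hcomp : IsCompact (connectedComponentIn S x) := by
    have hSk : IsCompact S := by
      apply Metric.isCompact_of_isClosed_isBounded hSc
      apply (Metric.isBounded_Icc (-R) R).subset
      intro t ht
      exact abs_le.1 (hR t ht)
    have hcl : IsClosed (connectedComponentIn S x) := by
      apply isClosed_of_closure_subset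
      apply isPreconnected_connectedComponentIn.closure.subset_connectedComponentIn
      · exact subset_closure (mem_connectedComponentIn hx)
      · exact closure_minimal (connectedComponentIn_subset S x) hSc
    exact hSk.of_isClosed_subset hcl (connectedComponentIn_subset S x)
  have hxQ : x ∈ connectedComponentIn S x := mem_connectedComponentIn hx
  obtain ⟨y1, hy1, hv1⟩ := attains_two f hdeg hr x hcomp hx
  have hneg : {y : ℝ | |(-f).eval y| ≤ 2} = S := by ext t; simp [hS]
  obtain ⟨y2, hy2, hv2⟩ := attains_two (-f) (by rwa [natDegree_neg]) (by
    intro c hc z hz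
    apply hr (-c) (by rwa [abs_neg]) z
    rw [map_neg] at hz
    rw [Complex.ofReal_neg, ← hz, neg_neg]) x (by rw [hneg]; exact hcomp) (by simpa using hx)
  rw [hneg] at hy2
  have hI := eq_Icc_of_connected_compact
    ⟨⟨x, hxQ⟩, isPreconnected_connectedComponentIn⟩ hcomp
  set u := sInf (connectedComponentIn S x)
  set v := sSup (connectedComponentIn S x)
  have hIS : ∀ t ∈ Set.Icc u v, |f.eval t| ≤ 2 := by
    intro t ht; rw [← hI] at ht; exact connectedComponentIn_subset S x ht
  rw [hI] at hxQ hy1 hy2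
  refine ⟨u, v, hxQ.1, hxQ.2, hIS, ?_⟩
  have := (convex_Icc u v).norm_image_sub_le_of_norm_deriv_le (f := fun t => f.eval t) (C := L)
    (fun t _ => f.differentiable.differentiableAt) (by
      intro t ht
      rw [f.deriv, Real.norm_eq_abs]
      exact hL t (hR t (hIS t ht))) hy2 hy1
  simp only [eval_neg] at hv2
  rw [hv1, show f.eval y2 = -2 by linarith, Real.norm_eq_abs, Real.norm_eq_abs] at this
  norm_num at this
  refine this.trans ?_
  have hL0 : 0 ≤ L := (abs_nonneg _).trans (hL x (hR x hx))
  gcongr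
  rw [abs_le]; constructor <;> linarith [hy1.1, hy1.2, hy2.1, hy2.2]

lemma cover (f : ℝ[X]) (hdeg : f.natDegree ≠ 0) (p : ℕ) (hp : f.natDegree ≤ p) (T : Set ℝ) (d : ℝ) (hd : 0 ≤ d)
    (hT : ∀ x ∈ T, ∃ y, |f.eval y| ≤ 2 ∧ |x - y| ≤ d) :
    volume (T \ {y | |f.eval y| ≤ 2}) ≤ ENNReal.ofReal (4 * p * d) := by
  set F : Finset ℝ := (f - C 2).roots.toFinset ∪ (f - C (-2)).roots.toFinset with hF
  have h0 : ∀ c : ℝ, f - C c ≠ 0 := by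
    intro c h
    apply hdeg
    rw [sub_eq_zero.1 h, natDegree_C]
  have hcard1 : ∀ c : ℝ, (f - C c).roots.toFinset.card ≤ p := by
    intro c
    refine (Multiset.toFinset_card_le _).trans ((card_roots' _).trans ?_)
    rwa [natDegree_sub_C]
  have hcard : F.card ≤ 2 * p := by
    refine (Finset.card_union_le _ _).trans ?_
    have := hcard1 2; have := hcard1 (-2); omega
  have hmem : ∀ r : ℝ, |f.eval r| = 2 → r ∈ F := by
    intro r hr
    rw [hF, Finset.mem_union, Multiset.mem_toFinset, Multiset.mem_toFinset, mem_roots (h0 _), mem_roots (h0 _)]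
    simp only [IsRoot, eval_sub, eval_C]
    rcases (abs_eq (by norm_num)).1 hr with h | h
    · left; linarith
    · right; linarith
  have hsub : T \ {y | |f.eval y| ≤ 2} ⊆ ⋃ r ∈ F, Set.Icc (r - d) (r + d) := by
    rintro x ⟨hxT, hx⟩
    obtain ⟨y, hy, hxy⟩ := hT x hxT
    replace hx : 2 < |f.eval x| := not_le.1 hx
    have hcont : ContinuousOn (fun t => |f.eval t|) (Set.uIcc y x) := f.continuous.abs.continuousOn
    obtain ⟨r, hr, hr2⟩ := intermediate_value_uIcc hcont (show (2:ℝ) ∈ Set.uIcc _ _ from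
      Set.mem_uIcc.2 (Or.inl ⟨hy, hx.le⟩))
    simp only [Set.mem_iUnion]
    refine ⟨r, hmem r hr2, ?_⟩
    rw [abs_le] at hxy
    rcases Set.mem_uIcc.1 hr with h | h <;> constructor <;> linarith [h.1, h.2, hxy.1, hxy.2]
  refine (measure_mono hsub).trans ((measure_biUnion_finset_le _ _).trans ?_)
  simp only [Real.volume_Icc]
  have e : ∀ r : ℝ, r + d - (r - d) = 2 * d := fun r => by ring
  simp only [e, Finset.sum_const, nsmul_eq_mul]
  rw [← ENNReal.ofReal_natCast, ← ENNReal.ofReal_mul (by positivity)]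
  apply ENNReal.ofReal_le_ofReal
  have : (F.card : ℝ) ≤ 2 * p := by exact_mod_cast hcard
  nlinarith
end bands

open MeasureTheory
section final
open Filter Topology

lemma final_meas (Sg : Set ℝ) (hcl : IsClosed Sg) (S : ℕ → Set ℝ) (N0 : ℕ) (C0 : ℝ) (hC0 : 0 < C0)
    (h1 : ∀ N ≥ N0, ∀ x ∈ Sg, ∃ y ∈ S N, |x - y| ≤ 3 * Real.exp (-(C0+2) * (N+1)))
    (h2 : ∀ N ≥ N0, ∀ y ∈ S N, ∃ x ∈ Sg, |y - x| ≤ 3 * Real.exp (-(C0+2) * (N+1)))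
    (h3 : ∀ N ≥ N0, ∀ y ∈ S N, ∃ u v, u ≤ y ∧ y ≤ v ∧ Set.Icc u v ⊆ S N ∧ Real.exp (-C0 * N) ≤ v - u)
    (h4 : ∀ N ≥ N0, volume (S N \ S (N+1)) ≤ ENNReal.ofReal (24 * (N+1) * Real.exp (-(C0+2) * (N+1)))) :
    ∀ τ ∈ Set.Ioo (0:ℝ) 1, ∃ δ₀ : ℝ, 0 < δ₀ ∧
      ∀ x ∈ Sg, ∀ δ : ℝ, 0 < δ → δ ≤ δ₀ →
        ENNReal.ofReal (τ * δ) ≤ volume (Set.Ioo (x - δ) (x + δ) ∩ Sg) := by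
  intro τ hτ
  -- tails
  have hexp0 : Tendsto (fun n : ℕ => Real.exp (-((n:ℝ)+1))) atTop (𝓝 0) := by
    apply Real.tendsto_exp_atBot.comp
    apply tendsto_neg_atTop_atBot.comp
    exact tendsto_atTop_add_const_right _ _ tendsto_natCast_atTop_atTop
  have hlim : ∀ N ≥ N0, ∀ y, (∀ j, y ∈ S (N + j)) → y ∈ Sg := by
    intro N hN y hy
    rw [← hcl.closure_eq, Metric.mem_closure_iff]
    intro ε hε
    obtain ⟨n, hn⟩ := ((hexp0.eventually_lt_const (show 0 < ε/3 by positivity)).and (eventually_ge_atTop N)).exists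
    obtain ⟨x, hx, hxy⟩ := h2 n (hN.trans hn.2) y (by
      have := hy (n - N); rwa [Nat.add_sub_cancel' hn.2] at this)
    refine ⟨x, hx, ?_⟩
    rw [Real.dist_eq]
    have : Real.exp (-(C0+2) * (n+1)) ≤ Real.exp (-((n:ℝ)+1)) := by
      apply Real.exp_le_exp.2
      have : (0:ℝ) ≤ n := n.cast_nonneg
      nlinarith
    linarith [hn.1]
  have htail : ∀ N ≥ N0, volume (S N \ Sg) ≤ ENNReal.ofReal (48 * Real.exp (-(C0+1) * (N+1))) := by
    intro N hN
    have hsub : S N \ Sg ⊆ ⋃ j : ℕ, (S (N+j) \ S (N+j+1)) := by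
      rintro y ⟨hy, hyS⟩
      by_contra hne
      simp only [Set.mem_iUnion, not_exists, Set.mem_diff, not_and, not_not] at hne
      apply hyS
      apply hlim N hN
      intro j
      induction j with
      | zero => exact hy
      | succ j ih => exact hne j ih
    refine (measure_mono hsub).trans ((measure_iUnion_le _).trans ?_)
    set A : ℝ := 24 * Real.exp (-(C0+1) * (N+1)) with hA
    have hA0 : 0 ≤ A := by positivity
    have hterm : ∀ j : ℕ, volume (S (N+j) \ S (N+j+1)) ≤ ENNReal.ofReal (A * (1/2)^j) := by
      intro j
      refine (h4 (N+j) (by omega)).trans (ENNReal.ofReal_le_ofReal ?_)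
      set m : ℝ := (N:ℝ) + j + 1 with hm
      have hm1 : ((N+j : ℕ) : ℝ) + 1 = m := by push_cast; ring
      rw [hm1]
      have e1 : m * Real.exp (-m) ≤ 1 := by
        rw [Real.exp_neg, ← div_eq_mul_inv, div_le_one (Real.exp_pos _)]
        linarith [Real.add_one_le_exp m]
      have e2 : Real.exp (-(C0+2) * m) = Real.exp (-m) * (Real.exp (-(C0+1) * (N+1)) * Real.exp (-(C0+1) * j)) := by
        rw [← Real.exp_add, ← Real.exp_add]; congr 1; rw [hm]; ring
      have e3 : Real.exp (-(C0+1) * j) ≤ (1/2)^j := by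
        rw [mul_comm, Real.exp_nat_mul]
        apply pow_le_pow_left₀ (Real.exp_pos _).le
        calc Real.exp (-(C0+1)) ≤ Real.exp (-1) := Real.exp_le_exp.2 (by linarith)
          _ ≤ 1/2 := by
            rw [Real.exp_neg, one_div]
            apply inv_anti₀ (by norm_num)
            linarith [Real.add_one_le_exp 1]
      rw [e2, hA]
      have p1 := Real.exp_pos (-(C0+1) * (N+1))
      calc _ = 24 * (m * Real.exp (-m)) * (Real.exp (-(C0+1) * (N+1)) * Real.exp (-(C0+1) * j)) := by ring
        _ ≤ 24 * 1 * (Real.exp (-(C0+1) * (N+1)) * (1/2)^j) := by gcongr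
        _ = _ := by ring
    refine (ENNReal.tsum_le_tsum hterm).trans ?_
    rw [← ENNReal.ofReal_tsum_of_nonneg (fun j => by positivity) (summable_geometric_two.mul_left A),
      tsum_mul_left, tsum_geometric_two]
    apply ENNReal.ofReal_le_ofReal
    rw [hA]; linarith
  obtain ⟨N1, hN1⟩ := ((hexp0.eventually_lt_const (show 0 < (1 - τ)/51 by linarith [hτ.2])).and
    (eventually_ge_atTop N0)).exists
  refine ⟨Real.exp (-C0 * N1), Real.exp_pos _, ?_⟩
  intro x hx δ hδ hδ0
  -- choose N
  have hlog : Real.log δ ≤ -C0 * N1 := by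
    rw [← Real.log_exp (-C0 * N1)]; exact Real.log_le_log hδ hδ0
  set N : ℕ := ⌊-Real.log δ / C0⌋₊ with hNdef
  have hq : (N1 : ℝ) ≤ -Real.log δ / C0 := by rw [le_div_iff₀ hC0]; linarith
  have hNN1 : N1 ≤ N := Nat.le_floor hq
  have hNle : (N:ℝ) ≤ -Real.log δ / C0 := Nat.floor_le ((Nat.cast_nonneg _).trans hq)
  have hNlt : -Real.log δ / C0 < N + 1 := Nat.lt_floor_add_one _
  rw [le_div_iff₀ hC0] at hNle
  rw [div_lt_iff₀ hC0] at hNlt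
  have hδle : δ ≤ Real.exp (-C0 * N) := by
    rw [← Real.log_le_iff_le_exp hδ]; linarith
  have hδgt : Real.exp (-C0 * (N+1)) ≤ δ := by
    rw [← Real.le_log_iff_exp_le hδ]; linarith
  have hN0 : N ≥ N0 := hN1.2.trans hNN1
  set κ : ℝ := Real.exp (-((N:ℝ)+1)) with hκ
  have hκ0 : 0 < κ := Real.exp_pos _
  have hκ1 : κ < (1-τ)/51 := by
    refine lt_of_le_of_lt ?_ hN1.1
    apply Real.exp_le_exp.2
    have : (N1:ℝ) ≤ N := by exact_mod_cast hNN1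
    linarith
  have hd1 : Real.exp (-(C0+1) * (N+1)) ≤ κ * δ := by
    calc _ = κ * Real.exp (-C0 * (N+1)) := by rw [hκ, ← Real.exp_add]; congr 1; ring
      _ ≤ _ := by gcongr
  have hd2 : Real.exp (-(C0+2) * (N+1)) ≤ κ * δ := by
    refine le_trans (Real.exp_le_exp.2 ?_) hd1
    have : (0:ℝ) ≤ N := N.cast_nonneg
    nlinarith
  obtain ⟨y, hy, hxy⟩ := h1 N hN0 x hx
  obtain ⟨u, v, huy, hyv, hsub, hlen⟩ := h3 N hN0 y hy
  set ρ := δ - 3 * κ * δ with hρ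
  have hρ0 : 0 ≤ ρ := by
    rw [hρ]; nlinarith [hτ.1]
  have hxy' : |x - y| ≤ 3 * κ * δ := by linarith
  rw [abs_le] at hxy'
  set I := Set.Ioo (max u (y - ρ)) (min v (y + ρ)) with hI
  have hIvol : ENNReal.ofReal ρ ≤ volume I := by
    rw [hI, Real.volume_Ioo]
    apply ENNReal.ofReal_le_ofReal
    have hkd : 0 ≤ 3 * κ * δ := by positivity
    rcases max_cases u (y - ρ) with ⟨ha, _⟩ | ⟨ha, _⟩ <;> rcases min_cases v (y + ρ) with ⟨hb, _⟩ | ⟨hb, _⟩ <;>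
      rw [ha, hb] <;> linarith
  have hIS : I ⊆ S N := fun t ht => hsub ⟨(le_max_left _ _).trans ht.1.le, ht.2.le.trans (min_le_left _ _)⟩
  have hIx : I ⊆ Set.Ioo (x - δ) (x + δ) := by
    intro t ht
    have a1 := (le_max_right u (y - ρ)).trans_lt ht.1
    have a2 := ht.2.trans_le (min_le_right v (y + ρ))
    constructor <;> linarith [hxy'.1, hxy'.2]
  have hIsub : I ⊆ (Set.Ioo (x - δ) (x + δ) ∩ Sg) ∪ (S N \ Sg) := by
    intro t ht
    by_cases h : t ∈ Sg
    · exact Or.inl ⟨hIx ht, h⟩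
    · exact Or.inr ⟨hIS ht, h⟩
  have hfin : ENNReal.ofReal (τ * δ) + ENNReal.ofReal (48 * κ * δ) ≤
      volume (Set.Ioo (x - δ) (x + δ) ∩ Sg) + ENNReal.ofReal (48 * κ * δ) := by
    rw [← ENNReal.ofReal_add (mul_nonneg hτ.1.le hδ.le) (by positivity)]
    calc _ ≤ ENNReal.ofReal ρ := ENNReal.ofReal_le_ofReal (by rw [hρ]; nlinarith)
      _ ≤ volume I := hIvol
      _ ≤ volume (Set.Ioo (x - δ) (x + δ) ∩ Sg) + volume (S N \ Sg) :=
        (measure_mono hIsub).trans (measure_union_le _ _)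
      _ ≤ _ := by
        gcongr
        refine (htail N hN0).trans (ENNReal.ofReal_le_ofReal ?_)
        linarith
  exact (ENNReal.add_le_add_iff_right ENNReal.ofReal_ne_top).1 hfin

lemma approx (C : ℝ) (hC : 0 < C) (p : ℕ → ℕ) (d : ℕ → ℤ → ℝ)
    (hconv : ∀ C : ℝ, 0 < C → ∀ ε : ℝ, 0 < ε → ∃ M₀ : ℕ, ∀ m ≥ M₀, ∀ n : ℤ,
      Real.exp (C * p (m + 1)) * d m n < ε) :
    ∃ N0 : ℕ, ∀ N ≥ N0, ∃ m, p m ≤ N ∧ ∀ n, d m n ≤ Real.exp (-C * (N+1)) := by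
  obtain ⟨M0, hM0⟩ := hconv C hC 1 one_pos
  refine ⟨p M0, fun N hN => ?_⟩
  have hdiv : ∀ (c ε x : ℝ), Real.exp c * x < ε → x ≤ Real.exp (-c) * ε := by
    intro c ε x h
    rw [Real.exp_neg, ← div_eq_inv_mul, le_div_iff₀ (Real.exp_pos _)]; linarith
  by_cases h : ∃ k, N < p (M0 + k + 1)
  · classical
    refine ⟨M0 + Nat.find h, ?_, ?_⟩
    · rcases Nat.eq_zero_or_pos (Nat.find h) with h0 | h0
      · rw [h0]; exact hN
      · have := Nat.find_min h (m := Nat.find h - 1) (by omega)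
        rw [not_lt, show M0 + (Nat.find h - 1) + 1 = M0 + Nat.find h by omega] at this
        exact this
    · intro n
      have h1 := hdiv _ _ _ (hM0 (M0 + Nat.find h) (by omega) n)
      rw [mul_one] at h1
      refine h1.trans (Real.exp_le_exp.2 ?_)
      have : ((N+1 : ℕ):ℝ) ≤ p (M0 + Nat.find h + 1) := by exact_mod_cast Nat.find_spec h
      push_cast at this
      nlinarith
  · push Not at h
    obtain ⟨M1, hM1⟩ := hconv C hC (Real.exp (-C * (N+1))) (Real.exp_pos _)
    refine ⟨M0 + M1 + 1, h M1, fun n => ?_⟩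
    have h1 := hdiv _ _ _ (hM1 (M0 + M1 + 1) (by omega) n)
    refine h1.trans ?_
    have : Real.exp (-(C * p (M0 + M1 + 1 + 1))) ≤ 1 := by
      rw [Real.exp_le_one_iff]
      have : (0:ℝ) ≤ p (M0 + M1 + 1 + 1) := Nat.cast_nonneg _
      nlinarith
    have := mul_le_mul_of_nonneg_right this (Real.exp_pos (-C * (N+1))).le
    linarith
end final

open MeasureTheory
section main
open Polynomial

lemma per_pack (g M D : ℝ) (hg : 0 < g) (hD1 : 1 ≤ D) (hD : 1 + 3 * M + 2 * M ≤ g * D)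
    {a b : ℤ → ℝ} {K : HH →L[ℂ] HH} (hK : IsJac a b K) (ha : ∀ n, g ≤ a n)
    (haM : ∀ n, |a n| ≤ M) (hbM : ∀ n, |b n| ≤ M)
    (p : ℕ) (hp : 0 < p) (hpa : ∀ n, a (n+p) = a n) (hpb : ∀ n, b (n+p) = b n) :
    (∀ x ∈ {E : ℝ | (E:ℂ) ∈ spectrum ℂ K}, ∃ u v, u ≤ x ∧ x ≤ v ∧
      Set.Icc u v ⊆ {E : ℝ | (E:ℂ) ∈ spectrum ℂ K} ∧ 4 ≤ 2 * D ^ (p+1) * (v - u)) ∧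
    (∀ (T : Set ℝ) (d : ℝ), 0 ≤ d → (∀ x ∈ T, ∃ y ∈ {E : ℝ | (E:ℂ) ∈ spectrum ℂ K}, |x - y| ≤ d) →
      volume (T \ {E : ℝ | (E:ℂ) ∈ spectrum ℂ K}) ≤ ENNReal.ofReal (4 * p * d)) := by
  have hapos : ∀ n, 0 < a n := fun n => hg.trans_le (ha n)
  have hM0 : 0 ≤ M := (abs_nonneg _).trans (haM 0)
  set f := disc a b p with hf
  have hsa := hK.isSelfAdjoint M haM hbM
  have hmem : ∀ (c : ℝ), |c| ≤ 2 → ∀ z : ℂ, aeval z f = (c:ℂ) → z ∈ spectrum ℂ K := by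
    intro c hc z hz
    obtain ⟨v, hv, hv0, hvp⟩ := exists_bloch hapos p hpa hpb z c hc hz
    exact mem_spec_of_bloch hK M haM hbM p hp z v hv hv0 hvp
  have hr : ∀ (c : ℝ), |c| ≤ 2 → ∀ z : ℂ, aeval z f = (c:ℂ) → z.im = 0 := by
    intro c hc z hz
    have := hsa.mem_spectrum_eq_re (hmem c hc z hz)
    rw [this]; simp
  have hS : {E : ℝ | (E:ℂ) ∈ spectrum ℂ K} = {x | |f.eval x| ≤ 2} := by
    ext x
    constructor
    · intro hx; exact disc_le_of_mem hK hapos p hp hpa hpb x hx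
    · intro hx
      exact hmem _ hx x (aeval_algebraMap_apply ℂ x f)
  have hR : ∀ x, |f.eval x| ≤ 2 → |x| ≤ 3 * M := by
    intro x hx
    have hx' : x ∈ {E : ℝ | (E:ℂ) ∈ spectrum ℂ K} := by rw [hS]; exact hx
    have := spectrum.norm_le_norm_mul_of_mem (show (x:ℂ) ∈ spectrum ℂ K from hx')
    rw [Complex.norm_real, Real.norm_eq_abs] at this
    have e1 : ‖(1 : HH →L[ℂ] HH)‖ ≤ 1 := ContinuousLinearMap.norm_id_le
    have e2 := hK.norm_le M haM hbM
    refine this.trans ((mul_le_mul e2 e1 (norm_nonneg _) (by positivity)).trans (by simp))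
  have hdeg : ∀ x, |f.eval x| ≤ 2 → f.natDegree ≠ 0 := by
    intro x hx h0
    rw [eq_C_of_natDegree_eq_zero h0, eval_C] at hx
    have := hR (3 * M + 1) (by rw [eq_C_of_natDegree_eq_zero h0, eval_C]; exact hx)
    have := (le_abs_self _).trans this
    linarith
  rw [hS]
  constructor
  · intro x hx
    exact band f (hdeg x hx) hr (3*M) (2 * D ^ (p+1)) hR
      (fun t ht => disc_der_bound a b (3*M) g M D t hg ht ha haM hbM hD1 hD p) x hx
  · intro T d hd hT
    rcases T.eq_empty_or_nonempty with rfl | ⟨x0, hx0⟩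
    · simp
    · obtain ⟨y, hy, _⟩ := hT x0 hx0
      exact cover f (hdeg y hy) p (disc_natDegree a b p) T d hd hT
end main

theorem jacobi_pastur_tkachenko_homogeneous
    (γ : ℝ) (hγ : 0 < γ) (a b : ℤ → ℝ)
    (ha_bdd : ∃ M : ℝ, ∀ n : ℤ, |a n| ≤ M)
    (hb_bdd : ∃ M : ℝ, ∀ n : ℤ, |b n| ≤ M)
    (ha_lb : ∀ n : ℤ, γ ≤ a n)
    (J : lp (fun _ : ℤ => ℂ) 2 →L[ℂ] lp (fun _ : ℤ => ℂ) 2)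
    (hJ : ∀ φ : lp (fun _ : ℤ => ℂ) 2, ∀ n : ℤ,
      (J φ) n = (a (n - 1) : ℂ) * φ (n - 1) + (a n : ℂ) * φ (n + 1) + (b n : ℂ) * φ n)
    (p : ℕ → ℕ) (hp : ∀ m, 0 < p m)
    (a' b' : ℕ → ℤ → ℝ)
    (hper : ∀ m : ℕ, ∀ n : ℤ,
      a' m (n + (p m : ℤ)) = a' m n ∧ b' m (n + (p m : ℤ)) = b' m n)
    (hpos : ∀ m : ℕ, ∀ n : ℤ, 0 < a' m n)
    (hconv : ∀ C : ℝ, 0 < C → ∀ ε : ℝ, 0 < ε → ∃ M₀ : ℕ, ∀ m ≥ M₀, ∀ n : ℤ,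
      Real.exp (C * p (m + 1)) * max |a' m n - a n| |b' m n - b n| < ε) :
    ∀ τ ∈ Set.Ioo (0:ℝ) 1, ∃ δ₀ : ℝ, 0 < δ₀ ∧
      ∀ x ∈ {E : ℝ | (E : ℂ) ∈ spectrum ℂ J}, ∀ δ : ℝ, 0 < δ → δ ≤ δ₀ →
        ENNReal.ofReal (τ * δ) ≤
          volume (Set.Ioo (x - δ) (x + δ) ∩ {E : ℝ | (E : ℂ) ∈ spectrum ℂ J}) := by
  obtain ⟨Ma, hMa⟩ := ha_bdd
  obtain ⟨Mb, hMb⟩ := hb_bdd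
  have hJ' : IsJac a b J := hJ
  set M : ℝ := max Ma Mb + 1 with hM
  have haM : ∀ n, |a n| ≤ M - 1 := fun n => by rw [hM]; linarith [hMa n, le_max_left Ma Mb]
  have hbM : ∀ n, |b n| ≤ M - 1 := fun n => by rw [hM]; linarith [hMb n, le_max_right Ma Mb]
  have hJs : IsSelfAdjoint J := hJ'.isSelfAdjoint M (fun n => by linarith [haM n]) (fun n => by linarith [hbM n])
  set g : ℝ := γ / 2 with hg
  have hg0 : 0 < g := by positivity
  set D : ℝ := max 1 ((1 + 3 * M + 2 * M) / g) with hDdef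
  have hD1 : 1 ≤ D := le_max_left _ _
  have hD : 1 + 3 * M + 2 * M ≤ g * D := by
    rw [← div_le_iff₀' hg0]; exact le_max_right _ _
  set C0 : ℝ := 2 * Real.log D + 1 with hC0
  have hlogD : 0 ≤ Real.log D := Real.log_nonneg hD1
  have hC0p : 0 < C0 := by positivity
  obtain ⟨N0, hN0⟩ := approx (C0 + 2) (by positivity) p (fun m n => max |a' m n - a n| |b' m n - b n|) hconv
  obtain ⟨N1, hN1⟩ := exists_nat_gt (Real.log (2 / γ))
  set N2 : ℕ := max (max N0 N1) 1 with hN2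
  have hsmall : ∀ N : ℕ, N ≥ N2 → Real.exp (-(C0+2) * (N+1)) ≤ 1 ∧ Real.exp (-(C0+2) * (N+1)) ≤ g := by
    intro N hN
    have hNN : (0:ℝ) ≤ N := N.cast_nonneg
    have hN' : (N1:ℝ) ≤ N := by
      have : N1 ≤ N := le_trans ((le_max_right _ _).trans (le_max_left _ _)) hN
      exact_mod_cast this
    constructor
    · rw [Real.exp_le_one_iff]; nlinarith
    · rw [← Real.le_log_iff_exp_le hg0]
      have : Real.log g = - Real.log (2 / γ) := by
        rw [← Real.log_inv, inv_div]
      rw [this]; nlinarith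
  have hex : ∀ N ≥ N2, ∃ m, ∃ K : HH →L[ℂ] HH, p m ≤ N ∧ IsJac (a' m) (b' m) K ∧
      (∀ n, |a' m n - a n| ≤ Real.exp (-(C0+2) * (N+1))) ∧
      (∀ n, |b' m n - b n| ≤ Real.exp (-(C0+2) * (N+1))) ∧
      (∀ n, g ≤ a' m n) ∧ (∀ n, |a' m n| ≤ M) ∧ (∀ n, |b' m n| ≤ M) := by
    intro N hN
    obtain ⟨m, hm, hmn⟩ := hN0 N (le_trans ((le_max_left _ _).trans (le_max_left _ _)) hN)
    have h1 : ∀ n, |a' m n - a n| ≤ Real.exp (-(C0+2) * (N+1)) := fun n => (le_max_left _ _).trans (hmn n)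
    have h2 : ∀ n, |b' m n - b n| ≤ Real.exp (-(C0+2) * (N+1)) := fun n => (le_max_right _ _).trans (hmn n)
    obtain ⟨s1, s2⟩ := hsmall N hN
    have h3 : ∀ n, |a' m n| ≤ M := by
      intro n
      have := abs_sub_abs_le_abs_sub (a' m n) (a n)
      linarith [h1 n, haM n]
    have h4 : ∀ n, |b' m n| ≤ M := by
      intro n
      have := abs_sub_abs_le_abs_sub (b' m n) (b n)
      linarith [h2 n, hbM n]
    obtain ⟨K, hK, _⟩ := exists_jac (a' m) (b' m) M h3 h4
    refine ⟨m, K, hm, hK, h1, h2, ?_, h3, h4⟩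
    intro n
    have := (abs_le.1 (h1 n)).1
    have := ha_lb n
    rw [hg] at s2 ⊢
    linarith
  choose! m K hmp hK hda hdb hlow hbA hbB using hex
  have hpack := fun N (hN : N ≥ N2) => per_pack g M D hg0 hD1 hD (hK N hN) (hlow N hN) (hbA N hN) (hbB N hN)
    (p (m N)) (hp _) (fun n => (hper (m N) n).1) (fun n => (hper (m N) n).2)
  have hKs := fun N (hN : N ≥ N2) => (hK N hN).isSelfAdjoint M (hbA N hN) (hbB N hN)
  have hKJ : ∀ N ≥ N2, ‖K N - J‖ ≤ 3 * Real.exp (-(C0+2) * (N+1)) := fun N hN =>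
    (hK N hN).norm_sub hJ' _ (hda N hN) (hdb N hN)
  refine final_meas {E : ℝ | (E : ℂ) ∈ spectrum ℂ J} ?_ (fun N => {E : ℝ | (E : ℂ) ∈ spectrum ℂ (K N)}) N2 C0 hC0p
    ?_ ?_ ?_ ?_
  · exact (spectrum.isClosed J).preimage Complex.continuous_ofReal
  · intro N hN x hx
    exact spec_perturb J (K N) (hKs N hN) _ (by rw [norm_sub_rev]; exact hKJ N hN) x hx
  · intro N hN x hx
    exact spec_perturb (K N) J hJs _ (hKJ N hN) x hx
  · intro N hN y hy
    obtain ⟨u, v, h1, h2, h3, h4⟩ := (hpack N hN).1 y hy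
    refine ⟨u, v, h1, h2, h3, ?_⟩
    have hvu : 0 ≤ v - u := by linarith
    have hNone : 1 ≤ N := (le_max_right _ _).trans hN
    have e1 : D ^ (p (m N) + 1) ≤ D ^ (2 * N) := pow_le_pow_right₀ hD1 (by have := hmp N hN; omega)
    have e2 : D ^ (2 * N) ≤ Real.exp (C0 * N) := by
      have hDpos : 0 < D := by linarith
      rw [← Real.exp_log (pow_pos hDpos _), Real.log_pow]
      apply Real.exp_le_exp.2
      push_cast
      have : (0:ℝ) ≤ N := N.cast_nonneg
      rw [hC0]; nlinarith
    have e3 : D ^ (p (m N) + 1) * (v - u) ≤ Real.exp (C0 * N) * (v - u) := by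
      gcongr; exact e1.trans e2
    rw [neg_mul, Real.exp_neg, inv_le_iff_one_le_mul₀' (Real.exp_pos _)]
    linarith
  · intro N hN
    have hNs : N + 1 ≥ N2 := by omega
    have hpos' := Real.exp_pos (-(C0+2) * (N+1))
    have hle : Real.exp (-(C0+2) * (((N+1:ℕ):ℝ)+1)) ≤ Real.exp (-(C0+2) * (N+1)) := by
      apply Real.exp_le_exp.2; push_cast; nlinarith
    have hKK : ‖K N - K (N+1)‖ ≤ 3 * (2 * Real.exp (-(C0+2) * (N+1))) := by
      apply (hK N hN).norm_sub (hK (N+1) hNs)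
      · intro n
        have h1 := hda N hN n
        have h2 := hda (N+1) hNs n
        have := abs_sub_le (a' (m N) n) (a n) (a' (m (N+1)) n)
        rw [abs_sub_comm (a n)] at this
        linarith
      · intro n
        have h1 := hdb N hN n
        have h2 := hdb (N+1) hNs n
        have := abs_sub_le (b' (m N) n) (b n) (b' (m (N+1)) n)
        rw [abs_sub_comm (b n)] at this
        linarith
    refine ((hpack (N+1) hNs).2 _ (3 * (2 * Real.exp (-(C0+2) * (N+1)))) (by positivity) ?_).trans ?_
    · intro x hx
      exact spec_perturb (K N) (K (N+1)) (hKs _ hNs) _ hKK x hx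
    · apply ENNReal.ofReal_le_ofReal
      have : (p (m (N+1)) : ℝ) ≤ N + 1 := by exact_mod_cast hmp (N+1) hNs
      calc _ = 24 * (p (m (N+1)) : ℝ) * Real.exp (-(C0+2) * (N+1)) := by ring
        _ ≤ _ := by gcongr
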